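/- arXiv:1005.4548 — 2 statements merged into one kernel-verified Lean document; each statement's English description precedes it below -/
import Mathlib

section
/- For p = 2 and q = 2^n, and 1 ≤ j < q - 1, the Gauss sum g(j) = τ(ω^{-j}) (valued in ℚ_2(ξ)) satisfies g(j) ≡ 2^{wt_2(j)} (mod 2^{wt_2(j)+1}), i.e., ν_2(g(j)) = wt_2(j), where wt_2(j) is the binary weight of j. -/
open WittVector

namespace WittVector

section PerfectField

variable {p : ℕ} [Fact p.Prime] {k : Type*} [Field k] [CharP k p] [PerfectRing k p]

theorem p_dvd_iff_constantCoeff_eq_zero (a : WittVector p k) :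
    (p : WittVector p k) ∣ a ↔ constantCoeff a = 0 := by
  constructor
  · rintro ⟨b, rfl⟩
    rw [map_mul, constantCoeff_apply, coeff_p_zero, zero_mul]
  · intro h
    rcases eq_or_ne a 0 with rfl | ha
    · exact dvd_zero _
    obtain ⟨m, b, hb, rfl⟩ := exists_eq_pow_p_mul a ha
    rcases m with - | m
    · simp [constantCoeff_apply, hb] at h
    · exact Dvd.dvd.mul_right (dvd_pow_self _ m.succ_ne_zero) b

end PerfectField

section InverseTeichmuller

variable (p : ℕ) [Fact p.Prime] (k : Type*) [Field k]

/-- The inverse `ω⁻¹` of the Teichmüller character, as a multiplicative character. -/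
noncomputable def invTeichmullerChar : MulChar k (WittVector p k) where
  toFun x := teichmuller p x⁻¹
  map_one' := by simp
  map_mul' x y := by simp [mul_comm]
  map_nonunit' x hx := by
    rw [isUnit_iff_ne_zero, not_not] at hx
    simp [hx, teichmuller_zero]

theorem invTeichmullerChar_apply (x : k) : invTeichmullerChar p k x = teichmuller p x⁻¹ := rfl

@[simp]
theorem constantCoeff_invTeichmullerChar (x : k) :
    constantCoeff (invTeichmullerChar p k x) = x⁻¹ := by
  rw [invTeichmullerChar_apply, constantCoeff_apply, teichmuller_coeff_zero]

theorem invTeichmullerChar_pow_ne_one [Fintype k] {j : ℕ} (hj : 0 < j)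
    (hjk : j < Fintype.card k - 1) : invTeichmullerChar p k ^ j ≠ 1 := by
  intro h
  refine hjk.not_ge (Nat.le_of_dvd hj ((FiniteField.forall_pow_eq_one_iff k j).1 fun x => ?_))
  have hx := congrArg constantCoeff (DFunLike.congr_fun h (x : k))
  rw [MulChar.pow_apply_coe, MulChar.one_apply_coe, map_pow, constantCoeff_invTeichmullerChar,
    map_one, inv_pow, inv_eq_one] at hx
  exact Units.ext (by simpa using hx)

end InverseTeichmuller

end WittVector

namespace FiniteField

section Sums

variable (F : Type*) [Field F] [Fintype F]

theorem sum_inv_mul_one_sub_pow {m : ℕ} (hm : 0 < m) (hmF : m < Fintype.card F - 1) :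
    ∑ x : F, x⁻¹ * (1 - x) ^ m = m := by
  classical
  have hinv : ∑ x : F, x⁻¹ = 0 := by
    rw [inv_involutive.bijective.sum_comp (fun x : F => x)]
    simpa using sum_pow_lt_card_sub_one F 1 (by lia)
  have hgeom (x : F) : x⁻¹ * (1 - x) ^ m =
      x⁻¹ - ∑ i ∈ Finset.range m, (1 - x) ^ i + if x = 0 then (m : F) else 0 := by
    rcases eq_or_ne x 0 with rfl | hx
    · simp
    · have h := mul_neg_geom_sum (1 - x) m
      rw [sub_sub_cancel] at h
      rw [if_neg hx, add_zero, ← mul_right_inj' hx, mul_sub, h, mul_inv_cancel_left₀ hx,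
        mul_inv_cancel₀ hx, sub_sub_cancel]
  have hpow : ∑ x : F, ∑ i ∈ Finset.range m, (1 - x) ^ i = 0 := by
    rw [Finset.sum_comm]
    refine Finset.sum_eq_zero fun i hi => ?_
    refine ((Equiv.subLeft (1 : F)).sum_comp (fun x => x ^ i)).trans ?_
    exact sum_pow_lt_card_sub_one F i ((Finset.mem_range.1 hi).trans hmF)
  simp_rw [hgeom, Finset.sum_add_distrib, Finset.sum_sub_distrib, hinv, hpow]
  simp

theorem inv_pow_eq_pow_card_sub_one_sub {j : ℕ} (hj : 0 < j) (hjF : j < Fintype.card F - 1)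
    (x : F) : x⁻¹ ^ j = x ^ (Fintype.card F - 1 - j) := by
  rcases eq_or_ne x 0 with rfl | hx
  · rw [inv_zero, zero_pow hj.ne', zero_pow (by lia)]
  · rw [inv_pow, inv_eq_iff_eq_inv, eq_comm, inv_eq_of_mul_eq_one_left]
    rw [← pow_add, Nat.add_sub_cancel' hjF.le, pow_card_sub_one_eq_one x hx]

theorem sum_inv_mul_trace {n : ℕ} [CharP F 2] [Algebra (ZMod 2) F]
    (hcard : Fintype.card F = 2 ^ n) (hn : 2 ≤ n) :
    ∑ x : F, x⁻¹ * algebraMap (ZMod 2) F (Algebra.trace (ZMod 2) F x) = 1 := by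
  have hrank : Module.finrank (ZMod 2) F = n := by
    have h := Module.card_eq_pow_finrank (K := ZMod 2) (V := F)
    rw [hcard, ZMod.card] at h
    exact (Nat.pow_right_injective le_rfl h).symm
  simp_rw [algebraMap_trace_eq_sum_pow, hrank, Nat.card_zmod, Finset.mul_sum]
  rw [Finset.sum_comm, Finset.sum_eq_single_of_mem 0 (Finset.mem_range.2 (by lia))]
  · classical
    have hite (x : F) : x⁻¹ * x ^ 2 ^ 0 = 1 - if x = 0 then 1 else 0 := by
      rcases eq_or_ne x 0 with rfl | hx <;> simp [*]
    simp_rw [hite, Finset.sum_sub_distrib]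
    simp [CharTwo.neg_eq]
  · intro i hi hi0
    rw [Finset.mem_range] at hi
    have hlt : 2 ^ i < 2 ^ n := Nat.pow_lt_pow_right one_lt_two hi
    have hle : 2 ^ 1 ≤ 2 ^ i := Nat.pow_le_pow_right two_pos (by lia)
    rw [← sum_pow_lt_card_sub_one F (2 ^ i - 1) (by lia)]
    refine Finset.sum_congr rfl fun x _ => ?_
    rcases eq_or_ne x 0 with rfl | hx
    · rw [inv_zero, zero_mul, zero_pow (by lia)]
    · rw [inv_mul_eq_iff_eq_mul₀ hx, mul_pow_sub_one (by lia)]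

theorem trace_sq [Algebra (ZMod 2) F] (x : F) :
    Algebra.trace (ZMod 2) F (x ^ 2) = Algebra.trace (ZMod 2) F x := by
  have h := Algebra.trace_eq_of_algEquiv (frobeniusAlgEquivOfAlgebraic (ZMod 2) F) x
  rwa [coe_frobeniusAlgEquivOfAlgebraic, ZMod.card] at h

end Sums

section TraceSign

variable (F : Type*) [Field F]

/-- The canonical additive character `x ↦ (-1) ^ Tr x` of a finite field of characteristic `2`. -/
noncomputable def traceSignChar (R : Type*) [CommRing R] [Algebra (ZMod 2) F] : AddChar F R :=
  (AddChar.zmodChar 2 (neg_one_sq (R := R))).compAddMonoidHom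
    (Algebra.trace (ZMod 2) F).toAddMonoidHom

theorem traceSignChar_apply (R : Type*) [CommRing R] [Algebra (ZMod 2) F] (x : F) :
    traceSignChar F R x = (-1) ^ (Algebra.trace (ZMod 2) F x).val := rfl

theorem traceSignChar_eq_one_sub (R : Type*) [CommRing R] [Algebra (ZMod 2) F] (x : F) :
    traceSignChar F R x = 1 - 2 * ((Algebra.trace (ZMod 2) F x).val : R) := by
  rw [traceSignChar_apply]
  generalize Algebra.trace (ZMod 2) F x = t
  obtain rfl | rfl : t = 0 ∨ t = 1 := by revert t; decide
  · simp
  · rw [ZMod.val_one]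
    norm_num

end TraceSign

end FiniteField

namespace WittVector

open FiniteField

variable (F : Type*) [Field F] [Fintype F] [CharP F 2]

theorem exists_jacobiSum_invTeichmullerChar_eq {j : ℕ} (hj : 0 < j) (hj_even : Even j)
    (hjF : j < Fintype.card F - 1) :
    ∃ c, jacobiSum (invTeichmullerChar 2 F) (invTeichmullerChar 2 F ^ j) = 1 + 2 * c := by
  have hodd : Odd (Fintype.card F - 1 - j) := by
    obtain ⟨n, -, hn⟩ := FiniteField.card F 2
    have : Even (Fintype.card F) := hn ▸ (even_two.pow_of_ne_zero n.ne_zero)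
    grind
  obtain ⟨c, hc⟩ := (p_dvd_iff_constantCoeff_eq_zero
    (jacobiSum (invTeichmullerChar 2 F) (invTeichmullerChar 2 F ^ j) - 1)).2 (by
      simp_rw [jacobiSum, map_sub, map_sum, map_mul, MulChar.pow_apply' _ hj.ne', map_pow,
        constantCoeff_invTeichmullerChar, inv_pow_eq_pow_card_sub_one_sub F hj hjF,
        sum_inv_mul_one_sub_pow F (Nat.sub_pos_of_lt hjF) (Nat.sub_lt_self hj hjF.le), map_one]
      rw [CharTwo.natCast_eq_ite, if_neg (Nat.not_even_iff_odd.2 hodd), sub_self])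
  exact ⟨c, by rw [← sub_eq_iff_eq_add', hc, Nat.cast_ofNat]⟩

variable [Algebra (ZMod 2) F]

theorem exists_neg_gaussSum_invTeichmullerChar_eq (hF : 2 < Fintype.card F) :
    ∃ c, -gaussSum (invTeichmullerChar 2 F) (traceSignChar F _) = 2 + 2 ^ 2 * c := by
  obtain ⟨n, -, hn⟩ := FiniteField.card F 2
  have hn2 : 2 ≤ (n : ℕ) := by
    by_contra! h
    have : (n : ℕ) = 1 := by have := n.pos; lia
    rw [hn, this] at hF
    lia
  have hsum : ∑ x, invTeichmullerChar 2 F x = 0 := MulChar.sum_eq_zero_of_ne_one <| by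
    simpa using invTeichmullerChar_pow_ne_one 2 F one_pos (by lia)
  obtain ⟨c, hc⟩ := (p_dvd_iff_constantCoeff_eq_zero
    (∑ x, invTeichmullerChar 2 F x * ((Algebra.trace (ZMod 2) F x).val : WittVector 2 F)
      - 1)).2 (by
      simp_rw [map_sub, map_sum, map_mul, map_natCast, constantCoeff_invTeichmullerChar, map_one,
        ← map_natCast (algebraMap (ZMod 2) F), ZMod.natCast_zmod_val,
        sum_inv_mul_trace F hn hn2, sub_self])
  refine ⟨c, ?_⟩
  simp_rw [gaussSum, traceSignChar_eq_one_sub, mul_sub, mul_one,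
    mul_left_comm _ (2 : WittVector 2 F), Finset.sum_sub_distrib, ← Finset.mul_sum, hsum,
    zero_sub, neg_neg]
  push_cast at hc
  linear_combination 2 * hc

theorem gaussSum_invTeichmullerChar_pow_two_mul (j : ℕ) :
    gaussSum (invTeichmullerChar 2 F ^ (2 * j)) (traceSignChar F _) =
      gaussSum (invTeichmullerChar 2 F ^ j) (traceSignChar F (WittVector 2 F)) := by
  refine (Finset.sum_congr rfl fun x _ => ?_).trans ((_root_.frobeniusEquiv F 2).toEquiv.sum_comp
    fun x => (invTeichmullerChar 2 F ^ j) x * traceSignChar F (WittVector 2 F) x)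
  have hchar : (invTeichmullerChar 2 F ^ (2 * j)) x = (invTeichmullerChar 2 F ^ j) (x ^ 2) := by
    rcases eq_or_ne x 0 with rfl | hx
    · rw [zero_pow two_ne_zero, MulChar.map_zero, MulChar.map_zero]
    · lift x to Fˣ using hx.isUnit
      rw [← Units.val_pow_eq_pow_val, MulChar.pow_apply_coe, MulChar.pow_apply_coe, pow_mul,
        Units.val_pow_eq_pow_val, map_pow]
  simp [hchar, traceSignChar_apply, trace_sq, frobenius_def]

theorem exists_neg_gaussSum_invTeichmullerChar_pow_eq {j : ℕ} (hj : 0 < j)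
    (hjF : j < Fintype.card F - 1) :
    ∃ c, -gaussSum (invTeichmullerChar 2 F ^ j) (traceSignChar F _) =
      2 ^ (Nat.digits 2 j).sum + 2 ^ ((Nat.digits 2 j).sum + 1) * c := by
  induction j using Nat.strong_induction_on with
  | _ j ih =>
  obtain ⟨k, rfl | rfl⟩ := Nat.even_or_odd' j
  · rw [gaussSum_invTeichmullerChar_pow_two_mul, Nat.digits_base_mul one_lt_two (by lia),
      List.sum_cons, zero_add]
    exact ih k (by lia) (by lia) (by lia)
  · rcases k.eq_zero_or_pos with rfl | hk
    · simpa using exists_neg_gaussSum_invTeichmullerChar_eq F (by lia)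
    obtain ⟨a, ha⟩ := exists_neg_gaussSum_invTeichmullerChar_eq F (by lia)
    obtain ⟨b, hb⟩ := ih (2 * k) (by lia) (by lia) (by lia)
    obtain ⟨c, hc⟩ := exists_jacobiSum_invTeichmullerChar_eq F (j := 2 * k) (by lia)
      (even_two_mul k) (by lia)
    have hunit : IsUnit (1 + 2 * c) := by
      refine isUnit_of_coeff_zero_ne_zero _ ?_
      rw [← constantCoeff_apply, map_add, map_mul, map_ofNat, CharTwo.two_eq_zero (R := F),
        zero_mul, add_zero, map_one]
      exact one_ne_zero
    obtain ⟨u, hu⟩ := hunit.exists_right_inv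
    have hmul := jacobiSum_mul_nontrivial (χ := invTeichmullerChar 2 F)
      (φ := invTeichmullerChar 2 F ^ (2 * k))
      (by rw [← pow_succ']; exact invTeichmullerChar_pow_ne_one 2 F hj hjF) (traceSignChar F _)
    rw [← pow_succ', hc] at hmul
    have hdigits : (Nat.digits 2 (2 * k + 1)).sum = (Nat.digits 2 (2 * k)).sum + 1 := by
      rw [Nat.digits_base_mul one_lt_two hk, add_comm (2 * k),
        Nat.digits_add 2 one_lt_two 1 k one_lt_two (Or.inl one_ne_zero)]
      simp [add_comm]
    rw [hdigits]
    refine ⟨c * u - (a + b + 2 * a * b) * u - 1, ?_⟩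
    generalize (Nat.digits 2 (2 * k)).sum = w at *
    set G := gaussSum (invTeichmullerChar 2 F ^ (2 * k + 1)) (traceSignChar F (WittVector 2 F))
    set G₂ := gaussSum (invTeichmullerChar 2 F ^ (2 * k)) (traceSignChar F (WittVector 2 F))
    linear_combination (G - 2 ^ (w + 1)) * hu - u * hmul + u * G₂ * ha
      - u * (2 + 2 ^ 2 * a) * hb

end WittVector

/-- For `q = 2^n` and `1 ≤ j < q - 1`, the Gauss sum
`g(j) = -Σ_{x ∈ F_q^×} ω(x)^{-j} (-1)^{Tr(x)}` (with values in the ring of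
integers `𝕎(F_q)` of `ℚ₂(ξ)`, `ω` the Teichmüller character) satisfies
`g(j) ≡ 2^{wt₂(j)} (mod 2^{wt₂(j)+1})`. -/
theorem gauss_sum_two_adic_valuation (n : ℕ) (hn : 1 ≤ n)
    (F : Type*) [Field F] [Fintype F] [DecidableEq F] [CharP F 2] [Algebra (ZMod 2) F]
    (hcard : Fintype.card F = 2 ^ n)
    (j : ℕ) (hj1 : 1 ≤ j) (hj2 : j < 2 ^ n - 1) :
    (2 ^ ((Nat.digits 2 j).sum + 1) : WittVector 2 F) ∣
      (- ∑ x : Fˣ, (WittVector.teichmuller 2 ((x⁻¹ : Fˣ) : F)) ^ j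
          * (-1) ^ (Algebra.trace (ZMod 2) F x).val)
        - 2 ^ ((Nat.digits 2 j).sum) := by
  obtain ⟨c, hc⟩ := exists_neg_gaussSum_invTeichmullerChar_pow_eq F hj1 (hcard ▸ hj2)
  refine ⟨c, ?_⟩
  rw [sub_eq_iff_eq_add', ← hc, gaussSum, neg_inj]
  refine Fintype.sum_of_injective _ Units.val_injective _ _ (fun x hx => ?_) fun x => ?_
  · rw [MulChar.map_nonunit _ hx, zero_mul]
  · rw [MulChar.pow_apply_coe, invTeichmullerChar_apply,
      FiniteField.traceSignChar_apply, Units.val_inv_eq_inv_val]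
end

section
/- Let n ≥ 6, q = 2^n, and a ∈ F_q. Then K(a) mod 64 is determined by the lifted trace T̂(a) mod 16 via K(a) ≡ -36·T̂(a) - 16·Q̂(a) (mod 64), where 2Q̂(a) = T̂(a)² - T̂(a); in particular, for instance, K(a) ≡ 0 (mod 64) iff T̂(a) ≡ 0 (mod 16), K(a) ≡ 4 (mod 64) iff T̂(a) ≡ 11 (mod 16), and K(a) ≡ 32 (mod 64) iff T̂(a) ≡ 8 (mod 16). -/
theorem two_pow_add_two_pow_ne_two_pow {i k : ℕ} (h : i < k) (s : ℕ) : 2 ^ i + 2 ^ k ≠ 2 ^ s := by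
  intro e
  have h1 : 2 ^ k < 2 ^ s := by rw [← e]; have := Nat.two_pow_pos i; omega
  have h2 : 2 ^ s < 2 ^ (k + 1) := by
    rw [← e, pow_succ]
    have := Nat.pow_lt_pow_right (a := 2) (by norm_num) h
    omega
  have h3 := (Nat.pow_lt_pow_iff_right (a := 2) (by norm_num)).1 h1
  have h4 := (Nat.pow_lt_pow_iff_right (a := 2) (by norm_num)).1 h2
  omega

theorem two_pow_add_two_pow_inj {i k s t : ℕ} (h : i < k) (h' : s < t)
    (e : 2 ^ i + 2 ^ k = 2 ^ s + 2 ^ t) : i = s ∧ k = t := by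
  have a1 := Nat.pow_lt_pow_right (a := 2) (by norm_num) h
  have a2 := Nat.pow_lt_pow_right (a := 2) (by norm_num) h'
  have h1 : 2 ^ k < 2 ^ (t + 1) := by rw [pow_succ]; have := Nat.two_pow_pos i; omega
  have h2 : 2 ^ t < 2 ^ (k + 1) := by rw [pow_succ]; have := Nat.two_pow_pos s; omega
  have h3 := (Nat.pow_lt_pow_iff_right (a := 2) (by norm_num)).1 h1
  have h4 := (Nat.pow_lt_pow_iff_right (a := 2) (by norm_num)).1 h2
  obtain rfl : k = t := by omega
  exact ⟨Nat.pow_right_injective le_rfl (by simpa using e), rfl⟩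

theorem two_pow_add_two_pow_add_two_pow_ne_two_pow {i j k : ℕ} (h : i < j) (h' : j < k) (s : ℕ) :
    2 ^ i + 2 ^ j + 2 ^ k ≠ 2 ^ s := by
  intro e
  have hik : i < k := h.trans h'
  have h1 : 2 ^ k < 2 ^ s := by rw [← e]; have := Nat.two_pow_pos i; have := Nat.two_pow_pos j; omega
  have h2 : 2 ^ s < 2 ^ (k + 1) := by
    rw [← e, pow_succ]
    have a1 := Nat.pow_lt_pow_right (a := 2) (by norm_num) h
    have a2 := Nat.pow_le_pow_right (n := 2) (by norm_num) (Nat.succ_le_of_lt h')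
    rw [Nat.succ_eq_add_one, pow_succ] at a2
    omega
  have h3 := (Nat.pow_lt_pow_iff_right (a := 2) (by norm_num)).1 h1
  have h4 := (Nat.pow_lt_pow_iff_right (a := 2) (by norm_num)).1 h2
  omega

theorem two_pow_add_pair_eq_two_pow {i j k s : ℕ} (h : i < j)
    (e : 2 ^ k + (2 ^ i + 2 ^ j) = 2 ^ s) : k = i ∧ j = i + 1 ∧ s = i + 2 := by
  rcases lt_trichotomy k i with hk | rfl | hk
  · exact absurd (by omega) (two_pow_add_two_pow_add_two_pow_ne_two_pow hk h s)
  · have e' : 2 ^ (k + 1) + 2 ^ j = 2 ^ s := by rw [pow_succ]; omega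
    obtain hj | rfl : k + 1 < j ∨ j = k + 1 := by omega
    · exact absurd e' (two_pow_add_two_pow_ne_two_pow hj s)
    · refine ⟨rfl, rfl, ?_⟩
      exact (Nat.pow_right_injective le_rfl
        (show 2 ^ (k + 2) = 2 ^ s by rw [← e', pow_succ _ (k + 1)]; omega)).symm
  · rcases lt_trichotomy k j with hj | rfl | hj
    · exact absurd (by omega) (two_pow_add_two_pow_add_two_pow_ne_two_pow hk hj s)
    · exact absurd (by rw [pow_succ]; omega)
        (two_pow_add_two_pow_ne_two_pow (i := i) (k := k + 1) (by omega) s)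
    · exact absurd (by omega) (two_pow_add_two_pow_add_two_pow_ne_two_pow h hj s)

theorem sub_one_dvd_add_sub_two_iff {q m : ℕ} (hq : 2 ≤ q) (hm : 2 ≤ m) (hm' : m < 2 * q - 1) :
    q - 1 ∣ m + (q - 1 - 1) ↔ m = q := by
  constructor
  · rintro ⟨c, hc⟩
    obtain ⟨r, rfl⟩ : ∃ r, q = r + 1 := ⟨q - 1, by omega⟩
    have : c < 3 := by
      by_contra! h
      have : (r + 1 - 1) * 3 ≤ (r + 1 - 1) * c := Nat.mul_le_mul_left _ h
      omega
    interval_cases c <;> omega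
  · rintro rfl
    exact ⟨2, by omega⟩

theorem sq_sum_range_eq {R : Type*} [CommRing R] (f : ℕ → R) (n : ℕ) :
    (∑ i ∈ Finset.range n, f i) ^ 2 =
      ∑ i ∈ Finset.range n, f i ^ 2 +
        2 * ∑ i ∈ Finset.range n, ∑ j ∈ Finset.Ioo i n, f i * f j := by
  induction n with
  | zero => simp
  | succ n ih =>
    have key : ∑ i ∈ Finset.range n, ∑ j ∈ Finset.Ioo i (n + 1), f i * f j =
        ∑ i ∈ Finset.range n, ∑ j ∈ Finset.Ioo i n, f i * f j +
          (∑ i ∈ Finset.range n, f i) * f n := by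
      rw [Finset.sum_mul, ← Finset.sum_add_distrib]
      refine Finset.sum_congr rfl fun i hi ↦ ?_
      have : Finset.Ioo i (n + 1) = insert n (Finset.Ioo i n) := by
        ext x; simp at hi ⊢; omega
      rw [this, Finset.sum_insert (by simp), add_comm]
    rw [Finset.sum_range_succ, Finset.sum_range_succ, Finset.sum_range_succ, key,
      show Finset.Ioo n (n + 1) = ∅ by ext; simp, add_sq, ih, Finset.sum_empty]
    ring

theorem exists_sq_sum_eq_sum_sq_add {R ι : Type*} [CommRing R] (s : Finset ι) (f : ι → R) :
    ∃ c, (∑ i ∈ s, f i) ^ 2 = ∑ i ∈ s, f i ^ 2 + 2 * c := by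
  classical
  induction s using Finset.induction_on with
  | empty => exact ⟨0, by simp⟩
  | insert a s ha ih =>
    obtain ⟨c, hc⟩ := ih
    refine ⟨f a * ∑ i ∈ s, f i + c, ?_⟩
    rw [Finset.sum_insert ha, Finset.sum_insert ha, add_sq, hc]
    ring

section TeichmullerPairing

open WittVector Finset

variable {F : Type*} [Field F]

section TraceSign

variable [Algebra (ZMod 2) F]

/-- The canonical additive character with values `±1`. -/
noncomputable def traceSign (x : F) : ℤ := (-1) ^ (Algebra.trace (ZMod 2) F x).val

theorem traceSign_add (x y : F) : traceSign (x + y) = traceSign x * traceSign y := by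
  simp only [traceSign, map_add]
  generalize Algebra.trace (ZMod 2) F x = u
  generalize Algebra.trace (ZMod 2) F y = v
  revert u v
  decide

theorem traceSign_zero : traceSign (0 : F) = 1 := by simp [traceSign]

variable [Fintype F]

theorem traceSign_sq (x : F) : traceSign (x ^ 2) = traceSign x := by
  have : Algebra.trace (ZMod 2) F (x ^ 2) = Algebra.trace (ZMod 2) F x := by
    simpa [ZMod.card] using (Algebra.trace_eq_of_algEquiv
      (FiniteField.frobeniusAlgEquivOfAlgebraic (ZMod 2) F) x)
  rw [traceSign, this, traceSign]

theorem sum_traceSign : ∑ x : F, traceSign x = 0 := by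
  obtain ⟨b, hb⟩ : ∃ b : F, traceSign b = -1 := by
    obtain ⟨b, hb⟩ := Algebra.trace_surjective (ZMod 2) F 1
    exact ⟨b, by rw [traceSign, hb]; decide⟩
  have h := Equiv.sum_comp (Equiv.addRight b) (traceSign : F → ℤ)
  simp only [Equiv.coe_addRight, traceSign_add, hb, ← sum_mul] at h
  omega

end TraceSign

/-- The lifted trace of `x`. -/
noncomputable def liftedTrace (n : ℕ) (x : F) : WittVector 2 F :=
  ∑ i ∈ range n, teichmuller 2 x ^ 2 ^ i

/-- The lifted quadratic trace of `x`. -/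
noncomputable def liftedQuadTrace (n : ℕ) (x : F) : WittVector 2 F :=
  ∑ i ∈ range n, ∑ j ∈ Ioo i n, teichmuller 2 x ^ (2 ^ i + 2 ^ j)

theorem liftedTrace_sq [Fintype F] {n : ℕ} (hcard : Fintype.card F = 2 ^ n) (x : F) :
    liftedTrace n x ^ 2 = liftedTrace n x + 2 * liftedQuadTrace n x := by
  rw [liftedTrace, sq_sum_range_eq]
  have hx : teichmuller 2 x ^ 2 ^ n = teichmuller 2 x := by
    rw [← map_pow, ← hcard, FiniteField.pow_card]
  simp only [liftedQuadTrace, pow_add]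
  generalize teichmuller 2 x = t at hx
  have h := (sum_range_succ' (fun i ↦ t ^ 2 ^ i) n).symm.trans (sum_range_succ _ n)
  rw [hx, pow_zero, pow_one, add_left_inj] at h
  rw [← h]
  simp only [← pow_mul, ← pow_succ]

variable [Fintype F] [DecidableEq F]

theorem sum_eq_add_sum_units {M : Type*} [AddCommMonoid M] (f : F → M) :
    ∑ x, f x = f 0 + ∑ y : Fˣ, f y := by
  rw [Fintype.sum_eq_add_sum_subtype_ne f 0, ← unitsEquivNeZero.sum_comp]
  rfl

/-- The pairing of a function on `Fˣ` with the `j`-th power of the inverse Teichmüller character. -/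
noncomputable def teichmullerPairing (j : ℕ) :
    (F → WittVector 2 F) →ₗ[WittVector 2 F] WittVector 2 F :=
  ∑ y : Fˣ, teichmuller 2 ((y⁻¹ : Fˣ) : F) ^ j • LinearMap.proj (y : F)

theorem teichmullerPairing_apply (j : ℕ) (f : F → WittVector 2 F) :
    teichmullerPairing j f = ∑ y : Fˣ, teichmuller 2 ((y⁻¹ : Fˣ) : F) ^ j * f y := by
  simp [teichmullerPairing]

theorem teichmuller_inv_pow {n j : ℕ} (hcard : Fintype.card F = 2 ^ n) (hj : j ≤ 2 ^ n - 1)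
    (y : Fˣ) : teichmuller 2 ((y⁻¹ : Fˣ) : F) ^ j = teichmuller 2 (y : F) ^ (2 ^ n - 1 - j) := by
  rw [← map_pow, ← map_pow]
  congr 1
  rw [← Units.val_pow_eq_pow_val, ← Units.val_pow_eq_pow_val]
  congr 1
  have h : y ^ (2 ^ n - 1) = 1 := by
    rw [← hcard, ← Fintype.card_units, pow_card_eq_one]
  rw [inv_pow, inv_eq_iff_mul_eq_one, ← pow_add, Nat.add_sub_cancel' hj, h]

variable [CharP F 2]

theorem sum_units_teichmuller_pow {n : ℕ} (hcard : Fintype.card F = 2 ^ n) (m : ℕ) :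
    ∑ y : Fˣ, teichmuller 2 (y : F) ^ m =
      if 2 ^ n - 1 ∣ m then (2 ^ n - 1 : WittVector 2 F) else 0 := by
  let f : Fˣ →* WittVector 2 F := (powMonoidHom m).comp ((teichmuller 2).comp (Units.coeHom F))
  have hf : f = 1 ↔ 2 ^ n - 1 ∣ m := by
    rw [← hcard, ← FiniteField.forall_pow_eq_one_iff F m, DFunLike.ext_iff]
    refine forall_congr' fun y ↦ ?_
    have : f y = teichmuller 2 ((y ^ m : Fˣ) : F) := by simp [f]
    rw [this, MonoidHom.one_apply, Units.ext_iff, Units.val_one]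
    refine ⟨fun h ↦ ?_, fun h ↦ by rw [h, map_one]⟩
    rw [← teichmuller_coeff_zero 2 ((y ^ m : Fˣ) : F), h, one_coeff_zero]
  classical
  have h := sum_hom_units f
  simp only [hf, Fintype.card_units, hcard] at h
  rw [Nat.cast_ite, Nat.cast_sub Nat.one_le_two_pow] at h
  simpa [f] using h

theorem teichmullerPairing_pow {n j : ℕ} (hcard : Fintype.card F = 2 ^ n) (hj : j ≤ 2 ^ n - 1)
    (m : ℕ) : teichmullerPairing j (fun x : F ↦ teichmuller 2 x ^ m) =
      if 2 ^ n - 1 ∣ m + (2 ^ n - 1 - j) then (2 ^ n - 1 : WittVector 2 F) else 0 := by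
  rw [teichmullerPairing_apply, ← sum_units_teichmuller_pow hcard]
  refine sum_congr rfl fun y _ ↦ ?_
  rw [teichmuller_inv_pow hcard hj, ← pow_add, add_comm]

theorem teichmullerPairing_pow_of_lt {n j m : ℕ} (hcard : Fintype.card F = 2 ^ n)
    (hj : j < 2 ^ n - 1) (hm : m < 2 ^ n - 1) :
    teichmullerPairing j (fun x : F ↦ teichmuller 2 x ^ m) =
      if m = j then (2 ^ n - 1 : WittVector 2 F) else 0 := by
  rw [teichmullerPairing_pow hcard hj.le]
  refine if_congr ⟨fun ⟨c, hc⟩ ↦ ?_, fun h ↦ ⟨1, by omega⟩⟩ rfl rfl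
  have hc2 : c < 2 := by
    by_contra! h
    have := Nat.mul_le_mul_left (2 ^ n - 1) h
    omega
  interval_cases c <;> omega

theorem teichmullerPairing_liftedTrace {n j : ℕ} (hn : 3 ≤ n) (hcard : Fintype.card F = 2 ^ n)
    (hj : j < 2 ^ n - 1) : teichmullerPairing j (liftedTrace n : F → WittVector 2 F) =
      (2 ^ n - 1) * ∑ i ∈ range n, if 2 ^ i = j then 1 else 0 := by
  have : (liftedTrace n : F → WittVector 2 F) =
      ∑ i ∈ range n, fun x ↦ teichmuller 2 x ^ 2 ^ i := by
    ext1 x; simp [liftedTrace]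
  rw [this, map_sum, mul_sum]
  refine sum_congr rfl fun i hi ↦ ?_
  rw [teichmullerPairing_pow_of_lt hcard hj, mul_ite, mul_one, mul_zero]
  have h1 : 2 ^ i ≤ 2 ^ (n - 1) := Nat.pow_le_pow_right (by norm_num) (by simp at hi; omega)
  have h2 : 2 ^ n = 2 * 2 ^ (n - 1) := by rw [← pow_succ', Nat.sub_add_cancel (by omega)]
  have h3 : 2 ^ 2 ≤ 2 ^ (n - 1) := Nat.pow_le_pow_right (by norm_num) (by omega)
  omega

theorem two_pow_add_two_pow_le {n i j : ℕ} (hij : i < j) (hj : j < n) :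
    4 * (2 ^ i + 2 ^ j) ≤ 3 * 2 ^ n := by
  have h1 : 2 ^ j ≤ 2 ^ (n - 1) := Nat.pow_le_pow_right (by norm_num) (by omega)
  have h2 : 2 ^ n = 2 * 2 ^ (n - 1) := by rw [← pow_succ', Nat.sub_add_cancel (by omega)]
  have h3 : 2 ^ (i + 1) ≤ 2 ^ j := Nat.pow_le_pow_right (by norm_num) hij
  rw [pow_succ] at h3
  omega

theorem teichmullerPairing_liftedQuadTrace {n j : ℕ} (hn : 3 ≤ n)
    (hcard : Fintype.card F = 2 ^ n) (hj : j < 2 ^ n - 1) :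
    teichmullerPairing j (liftedQuadTrace n : F → WittVector 2 F) =
      (2 ^ n - 1) * ∑ i ∈ range n, ∑ k ∈ Ioo i n, if 2 ^ i + 2 ^ k = j then 1 else 0 := by
  have : (liftedQuadTrace n : F → WittVector 2 F) =
      ∑ i ∈ range n, ∑ k ∈ Ioo i n, fun x ↦ teichmuller 2 x ^ (2 ^ i + 2 ^ k) := by
    ext1 x; simp [liftedQuadTrace]
  simp only [this, map_sum, mul_sum]
  refine sum_congr rfl fun i hi ↦ sum_congr rfl fun k hk ↦ ?_
  rw [teichmullerPairing_pow_of_lt hcard hj, mul_ite, mul_one, mul_zero]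
  rw [mem_Ioo] at hk
  have h1 := two_pow_add_two_pow_le hk.1 hk.2
  have h3 : 2 ^ 3 ≤ 2 ^ n := Nat.pow_le_pow_right (by norm_num) hn
  omega

theorem teichmullerPairing_one {n j : ℕ} (hn : 3 ≤ n) (hcard : Fintype.card F = 2 ^ n)
    (hj : j < 2 ^ n - 1) : teichmullerPairing j (1 : F → WittVector 2 F) =
      if 0 = j then (2 ^ n - 1 : WittVector 2 F) else 0 := by
  have h3 : 2 ^ 3 ≤ 2 ^ n := Nat.pow_le_pow_right (by norm_num) hn
  rw [← teichmullerPairing_pow_of_lt hcard hj (by omega)]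
  congr 1
  ext1 x
  simp

theorem teichmullerPairing_one_liftedTrace_mul_liftedQuadTrace {n : ℕ} (hn : 3 ≤ n)
    (hcard : Fintype.card F = 2 ^ n) :
    teichmullerPairing 1 (liftedTrace n * liftedQuadTrace n : F → WittVector 2 F) =
      2 ^ n - 1 := by
  have : (liftedTrace n * liftedQuadTrace n : F → WittVector 2 F) =
      ∑ k ∈ range n, ∑ i ∈ range n, ∑ j ∈ Ioo i n,
        fun x ↦ teichmuller 2 x ^ (2 ^ k + (2 ^ i + 2 ^ j)) := by
    ext1 x
    simp only [liftedTrace, liftedQuadTrace, Pi.mul_apply, Finset.sum_apply, pow_add _ _ (_ + _)]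
    rw [sum_mul]
    simp only [mul_sum]
  have h8 : 2 ^ 3 ≤ 2 ^ n := Nat.pow_le_pow_right (by norm_num) hn
  have key : ∀ k < n, ∀ i, ∀ j, i < j → j < n →
      teichmullerPairing 1 (fun x : F ↦ teichmuller 2 x ^ (2 ^ k + (2 ^ i + 2 ^ j))) =
        if 2 ^ k + (2 ^ i + 2 ^ j) = 2 ^ n then (2 ^ n - 1 : WittVector 2 F) else 0 := by
    intro k hk i j hij hj
    have h1 := two_pow_add_two_pow_le hij hj
    have h2 : 2 ^ k ≤ 2 ^ (n - 1) := Nat.pow_le_pow_right (by norm_num) (by omega)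
    have h3 : 2 ^ n = 2 * 2 ^ (n - 1) := by rw [← pow_succ', Nat.sub_add_cancel (by omega)]
    have h4 := Nat.two_pow_pos k
    have h5 := Nat.two_pow_pos i
    have h6 := Nat.two_pow_pos j
    rw [teichmullerPairing_pow hcard (by omega)]
    exact if_congr (sub_one_dvd_add_sub_two_iff (by omega) (by omega) (by omega)) rfl rfl
  simp only [this, map_sum]
  rw [sum_eq_single (n - 2), sum_eq_single (n - 2), sum_eq_single (n - 1)]
  · rw [key _ (by omega) _ _ (by omega) (by omega), if_pos]
    obtain ⟨r, rfl⟩ : ∃ r, n = r + 2 := ⟨n - 2, by omega⟩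
    simp only [Nat.add_sub_cancel, show r + 2 - 1 = r + 1 by omega, pow_succ]
    omega
  · intro j hj hj'
    rw [mem_Ioo] at hj
    rw [key _ (by omega) _ _ hj.1 hj.2, if_neg]
    intro h
    have := two_pow_add_pair_eq_two_pow hj.1 h
    omega
  · exact fun h ↦ absurd (mem_Ioo.2 (by omega)) h
  · intro i hi hi'
    refine sum_eq_zero fun j hj ↦ ?_
    rw [mem_Ioo] at hj
    rw [key _ (by omega) _ _ hj.1 hj.2, if_neg]
    intro h
    have := two_pow_add_pair_eq_two_pow hj.1 h
    omega
  · exact fun h ↦ absurd (mem_range.2 (by omega)) h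
  · intro k hk hk'
    refine sum_eq_zero fun i hi ↦ sum_eq_zero fun j hj ↦ ?_
    rw [mem_Ioo] at hj
    rw [key _ (mem_range.1 hk) _ _ hj.1 hj.2, if_neg]
    intro h
    have := two_pow_add_pair_eq_two_pow hj.1 h
    omega
  · exact fun h ↦ absurd (mem_range.2 (by omega)) h

theorem exists_teichmullerPairing_one_liftedQuadTrace_sq {n : ℕ} (hn : 3 ≤ n)
    (hcard : Fintype.card F = 2 ^ n) :
    ∃ c, teichmullerPairing 1 (liftedQuadTrace n ^ 2 : F → WittVector 2 F) = 2 * c := by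
  have h8 : 2 ^ 3 ≤ 2 ^ n := Nat.pow_le_pow_right (by norm_num) hn
  have : ∀ x : F, ∃ c : WittVector 2 F, liftedQuadTrace n x ^ 2 =
      ∑ p ∈ (range n).sigma fun i ↦ Ioo i n, teichmuller 2 x ^ (2 ^ (p.1 + 1) + 2 ^ (p.2 + 1)) +
        2 * c := by
    intro x
    obtain ⟨c, hc⟩ := exists_sq_sum_eq_sum_sq_add ((range n).sigma fun i ↦ Ioo i n)
      fun p ↦ teichmuller 2 x ^ (2 ^ p.1 + 2 ^ p.2)
    refine ⟨c, ?_⟩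
    rw [liftedQuadTrace, sum_sigma', hc]
    simp only [← pow_mul, pow_succ 2, add_mul]
  choose c hc using this
  have h : (liftedQuadTrace n ^ 2 : F → WittVector 2 F) =
      ∑ p ∈ (range n).sigma fun i ↦ Ioo i n,
        (fun x ↦ teichmuller 2 x ^ (2 ^ (p.1 + 1) + 2 ^ (p.2 + 1))) + (2 : WittVector 2 F) • c := by
    ext1 x
    simpa using hc x
  refine ⟨teichmullerPairing 1 c, ?_⟩
  rw [h, map_add, map_smul, smul_eq_mul, map_sum, add_eq_right]
  refine sum_eq_zero fun p hp ↦ ?_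
  rw [mem_sigma, mem_Ioo] at hp
  have h1 := two_pow_add_two_pow_le hp.2.1 hp.2.2
  have h5 := Nat.two_pow_pos p.1
  rw [teichmullerPairing_pow hcard (by omega), if_neg]
  rw [sub_one_dvd_add_sub_two_iff (by omega) (by rw [pow_succ, pow_succ]; omega)
    (by rw [pow_succ, pow_succ]; omega)]
  exact two_pow_add_two_pow_ne_two_pow (by omega) n

theorem sum_teichmuller_unit_pow {n : ℕ} (hcard : Fintype.card F = 2 ^ n) (u : Fˣ) :
    ∑ j ∈ range (2 ^ n - 1), teichmuller 2 (u : F) ^ j =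
      if u = 1 then (2 ^ n - 1 : WittVector 2 F) else 0 := by
  split_ifs with hu
  · simp [hu, Nat.cast_sub Nat.one_le_two_pow]
  · have h1 : teichmuller 2 (u : F) - 1 ≠ 0 := by
      intro h
      refine hu (Units.ext ?_)
      rw [sub_eq_zero] at h
      rw [← teichmuller_coeff_zero 2 (u : F), h, one_coeff_zero, Units.val_one]
    have h2 : teichmuller 2 (u : F) ^ (2 ^ n - 1) = 1 := by
      rw [← map_pow, ← hcard, FiniteField.pow_card_sub_one_eq_one _ u.ne_zero, map_one]
    refine (mul_eq_zero.1 ?_).resolve_left h1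
    rw [mul_geom_sum, h2, sub_self]

end TeichmullerPairing

section GaussSum

open WittVector Finset

variable {F : Type*} [Field F] [CharP F 2]

theorem two_dvd_iff_coeff_zero [PerfectRing F 2] (z : WittVector 2 F) :
    (2 : WittVector 2 F) ∣ z ↔ z.coeff 0 = 0 := by
  rw [← mem_span_p_iff_coeff_zero_eq_zero (p := 2), Ideal.mem_span_singleton]
  simp

theorem wittVector_two_ne_zero : (2 : WittVector 2 F) ≠ 0 := by
  simpa using p_nonzero 2 F

theorem wittVector_isUnit_of_two_dvd_sub_one [PerfectRing F 2] {u : WittVector 2 F}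
    (hu : (2 : WittVector 2 F) ∣ u - 1) : IsUnit u := by
  apply isUnit_of_coeff_zero_ne_zero
  rw [two_dvd_iff_coeff_zero, ← constantCoeff_apply, map_sub, map_one, sub_eq_zero] at hu
  rw [← constantCoeff_apply, hu]
  exact one_ne_zero

theorem sixtyfour_dvd_iff_of_eq [PerfectRing F 2] {x y u e : WittVector 2 F}
    (hu : (2 : WittVector 2 F) ∣ u - 1)
    (h : x = -(4 * (y * u)) + 64 * e) : (64 : WittVector 2 F) ∣ x ↔ (16 : WittVector 2 F) ∣ y := by
  have h4 : (4 : WittVector 2 F) ≠ 0 := by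
    have := mul_ne_zero (wittVector_two_ne_zero (F := F)) wittVector_two_ne_zero
    norm_num at this
    exact this
  rw [h, dvd_add_left (dvd_mul_right _ _), dvd_neg, show (64 : WittVector 2 F) = 4 * 16 by norm_num,
    mul_dvd_mul_iff_left h4, (wittVector_isUnit_of_two_dvd_sub_one hu).dvd_mul_right]

variable [Fintype F] [Algebra (ZMod 2) F]

theorem exists_liftedTrace_eq {n : ℕ} (hcard : Fintype.card F = 2 ^ n) (x : F) :
    ∃ z : WittVector 2 F, (traceSign x = 1 ∧ liftedTrace n x = 2 * z) ∨
      (traceSign x = -1 ∧ liftedTrace n x = 1 + 2 * z) := by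
  have hrank : Module.finrank (ZMod 2) F = n := by
    have h := Module.card_eq_pow_finrank (K := ZMod 2) (V := F)
    rw [hcard, ZMod.card] at h
    exact (Nat.pow_right_injective le_rfl h).symm
  have hc : constantCoeff (liftedTrace n x) =
      algebraMap (ZMod 2) F (Algebra.trace (ZMod 2) F x) := by
    rw [FiniteField.algebraMap_trace_eq_sum_pow, hrank]
    simp [liftedTrace, constantCoeff_apply, teichmuller_coeff_zero, map_sum, map_pow]
  obtain h | h : Algebra.trace (ZMod 2) F x = 0 ∨ Algebra.trace (ZMod 2) F x = 1 := by
    generalize Algebra.trace (ZMod 2) F x = u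
    revert u
    decide
  · rw [h, map_zero] at hc
    obtain ⟨z, hz⟩ := (two_dvd_iff_coeff_zero _).2 hc
    exact ⟨z, .inl ⟨by simp [traceSign, h], hz⟩⟩
  · rw [h, map_one] at hc
    obtain ⟨z, hz⟩ := (two_dvd_iff_coeff_zero (liftedTrace n x - 1)).2 (by
      rw [← constantCoeff_apply, map_sub, hc, map_one, sub_self])
    refine ⟨z, .inr ⟨by rw [traceSign, h]; decide, by rw [← hz]; ring⟩⟩

theorem exists_traceSign_eq_mod_eight {n : ℕ} (hcard : Fintype.card F = 2 ^ n) :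
    ∃ e : F → WittVector 2 F, ∀ x, (traceSign x : WittVector 2 F) =
      1 - 2 * liftedTrace n x - 4 * liftedQuadTrace n x + 8 * e x := by
  suffices ∀ x : F, ∃ e : WittVector 2 F, (traceSign x : WittVector 2 F) =
      1 - 2 * liftedTrace n x - 4 * liftedQuadTrace n x + 8 * e by
    choose e he using this
    exact ⟨e, he⟩
  intro x
  have hs := liftedTrace_sq hcard x
  obtain ⟨z, ⟨h, hz⟩ | ⟨h, hz⟩⟩ := exists_liftedTrace_eq hcard x <;> rw [hz] at hs
  · exact ⟨z ^ 2, by rw [h, hz]; push_cast; linear_combination (-2) * hs⟩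
  · exact ⟨z + z ^ 2, by rw [h, hz]; push_cast; linear_combination (-2) * hs⟩

theorem exists_traceSign_eq_mod_sixteen {n : ℕ} (hcard : Fintype.card F = 2 ^ n) :
    ∃ e : F → WittVector 2 F, ∀ x, (traceSign x : WittVector 2 F) =
      1 - 2 * liftedTrace n x ^ 4 + 16 * e x := by
  suffices ∀ x : F, ∃ e : WittVector 2 F, (traceSign x : WittVector 2 F) =
      1 - 2 * liftedTrace n x ^ 4 + 16 * e by
    choose e he using this
    exact ⟨e, he⟩
  intro x
  obtain ⟨z, ⟨h, hz⟩ | ⟨h, hz⟩⟩ := exists_liftedTrace_eq hcard x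
  · exact ⟨2 * z ^ 4, by rw [h, hz]; push_cast; ring⟩
  · exact ⟨z + 3 * z ^ 2 + 4 * z ^ 3 + 2 * z ^ 4, by rw [h, hz]; push_cast; ring⟩

variable [DecidableEq F]

/-- The Gauss sum of `traceSign` twisted by the `j`-th power of the inverse Teichmüller
character. -/
noncomputable def teichmullerGaussSum (F : Type*) [Field F] [CharP F 2] [Fintype F]
    [Algebra (ZMod 2) F] [DecidableEq F] (j : ℕ) : WittVector 2 F :=
  teichmullerPairing j fun x : F ↦ (traceSign x : WittVector 2 F)

theorem exists_teichmullerGaussSum_eq_mod_eight {n j : ℕ} (hn : 3 ≤ n)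
    (hcard : Fintype.card F = 2 ^ n) (hj : j < 2 ^ n - 1) : ∃ e, teichmullerGaussSum F j =
      (2 ^ n - 1) * ((if 0 = j then 1 else 0) - 2 * (∑ i ∈ range n, if 2 ^ i = j then 1 else 0) -
        4 * ∑ i ∈ range n, ∑ k ∈ Ioo i n, if 2 ^ i + 2 ^ k = j then 1 else 0) + 8 * e := by
  obtain ⟨e, he⟩ := exists_traceSign_eq_mod_eight hcard
  refine ⟨teichmullerPairing j e, ?_⟩
  have : (fun x : F ↦ (traceSign x : WittVector 2 F)) =
      1 - (2 : WittVector 2 F) • liftedTrace n - (4 : WittVector 2 F) • liftedQuadTrace n +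
        (8 : WittVector 2 F) • e := by
    ext1 x
    simpa using he x
  rw [teichmullerGaussSum, this]
  simp only [map_add, map_sub, map_smul, smul_eq_mul]
  rw [teichmullerPairing_one hn hcard hj, teichmullerPairing_liftedTrace hn hcard hj,
    teichmullerPairing_liftedQuadTrace hn hcard hj, mul_sub, mul_sub, mul_ite, mul_one, mul_zero]
  ring

theorem exists_teichmullerGaussSum_one_eq {n : ℕ} (hn : 4 ≤ n) (hcard : Fintype.card F = 2 ^ n) :
    ∃ e, teichmullerGaussSum F 1 = 10 + 16 * e := by
  have h8 : 2 ^ 3 ≤ 2 ^ n := Nat.pow_le_pow_right (by norm_num) (by omega)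
  obtain ⟨e, he⟩ := exists_traceSign_eq_mod_sixteen hcard
  obtain ⟨c, hc⟩ := exists_teichmullerPairing_one_liftedQuadTrace_sq (by omega) hcard
  have : (fun x : F ↦ (traceSign x : WittVector 2 F)) =
      1 - (2 : WittVector 2 F) • liftedTrace n - (4 : WittVector 2 F) • liftedQuadTrace n -
        (8 : WittVector 2 F) • (liftedTrace n * liftedQuadTrace n) -
          (8 : WittVector 2 F) • (liftedQuadTrace n ^ 2) + (16 : WittVector 2 F) • e := by
    ext1 x
    have hs := liftedTrace_sq hcard x
    simp only [he x, Pi.add_apply, Pi.sub_apply, Pi.smul_apply, Pi.mul_apply, Pi.pow_apply,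
      Pi.one_apply, smul_eq_mul]
    linear_combination (-2) * (liftedTrace n x ^ 2 + liftedTrace n x +
      2 * liftedQuadTrace n x + 1) * hs
  rw [teichmullerGaussSum, this]
  simp only [map_add, map_sub, map_smul, smul_eq_mul]
  rw [teichmullerPairing_one (by omega) hcard (by omega), if_neg zero_ne_one, hc,
    teichmullerPairing_liftedTrace (by omega) hcard (by omega),
    teichmullerPairing_liftedQuadTrace (by omega) hcard (by omega),
    teichmullerPairing_one_liftedTrace_mul_liftedQuadTrace (by omega) hcard,
    sum_eq_single 0 (fun i _ hi ↦ if_neg (by simp [hi])) (by simp; omega),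
    sum_eq_zero fun i hi ↦ sum_eq_zero fun k hk ↦ if_neg (by
      have := Nat.two_pow_pos i
      have := Nat.two_pow_pos k
      omega)]
  obtain ⟨r, rfl⟩ := Nat.exists_eq_add_of_le hn
  refine ⟨-(10 * 2 ^ r) - c + teichmullerPairing 1 e, ?_⟩
  rw [pow_zero, if_pos rfl, pow_add]
  ring

theorem teichmullerGaussSum_two_mul (j : ℕ) :
    teichmullerGaussSum F (2 * j) = teichmullerGaussSum F j := by
  have hinj : Function.Injective fun y : Fˣ ↦ y ^ 2 := fun y z h ↦
    Units.ext (frobenius_inj F 2 (by simpa [frobenius_def, Units.ext_iff] using h))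
  rw [teichmullerGaussSum, teichmullerGaussSum, teichmullerPairing_apply,
    teichmullerPairing_apply, ← (Finite.injective_iff_bijective.1 hinj).sum_comp
      fun y : Fˣ ↦ teichmuller 2 ((y⁻¹ : Fˣ) : F) ^ j * (traceSign (y : F) : WittVector 2 F)]
  refine sum_congr rfl fun y _ ↦ ?_
  rw [Units.val_pow_eq_pow_val, traceSign_sq, pow_mul, ← map_pow, ← Units.val_pow_eq_pow_val,
    inv_pow]

theorem teichmullerGaussSum_two_pow (s : ℕ) :
    teichmullerGaussSum F (2 ^ s) = teichmullerGaussSum F 1 := by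
  induction s with
  | zero => rw [pow_zero]
  | succ s ih => rw [pow_succ', teichmullerGaussSum_two_mul, ih]

theorem teichmullerGaussSum_zero : teichmullerGaussSum F 0 = -1 := by
  have h := sum_eq_add_sum_units (fun x : F ↦ traceSign x)
  rw [sum_traceSign, traceSign_zero] at h
  have h' : ∑ y : Fˣ, traceSign (y : F) = -1 := by omega
  rw [teichmullerGaussSum, teichmullerPairing_apply]
  simp only [pow_zero, one_mul]
  exact_mod_cast congrArg (Int.cast : ℤ → WittVector 2 F) h'

theorem traceSign_eq_sum_teichmullerGaussSum {n : ℕ} (hcard : Fintype.card F = 2 ^ n) (y : Fˣ) :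
    (2 ^ n - 1) * (traceSign (y : F) : WittVector 2 F) =
      ∑ j ∈ range (2 ^ n - 1), teichmullerGaussSum F j * teichmuller 2 (y : F) ^ j := by
  simp only [teichmullerGaussSum, teichmullerPairing_apply, sum_mul]
  rw [sum_comm, sum_eq_single y]
  · rw [sum_congr rfl fun j _ ↦ show _ = (traceSign (y : F) : WittVector 2 F) *
      teichmuller 2 ((1 : Fˣ) : F) ^ j by
        rw [mul_right_comm, ← mul_pow, ← map_mul, Units.inv_mul]; simp,
      ← mul_sum, sum_teichmuller_unit_pow hcard, if_pos rfl, mul_comm]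
  · intro z _ hz
    rw [sum_congr rfl fun j _ ↦ show _ = (traceSign (z : F) : WittVector 2 F) *
      teichmuller 2 ((z⁻¹ * y : Fˣ) : F) ^ j by
        rw [mul_right_comm, ← mul_pow, ← map_mul, ← Units.val_mul, mul_comm],
      ← mul_sum, sum_teichmuller_unit_pow hcard, if_neg (by rwa [inv_mul_eq_one]), mul_zero]
  · simp

theorem sum_traceSign_inv_mul_traceSign {n : ℕ} (hcard : Fintype.card F = 2 ^ n)
    (a : Fˣ) :
    (2 ^ n - 1) * ∑ y : Fˣ,
        (traceSign ((y⁻¹ : Fˣ) : F) * traceSign ((a : F) * y) : WittVector 2 F) =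
      ∑ j ∈ range (2 ^ n - 1), teichmullerGaussSum F j ^ 2 * teichmuller 2 (a : F) ^ j := by
  have hG : ∀ j, ∑ y : Fˣ, (traceSign ((y⁻¹ : Fˣ) : F) : WittVector 2 F) *
      teichmuller 2 (y : F) ^ j = teichmullerGaussSum F j := by
    intro j
    rw [teichmullerGaussSum, teichmullerPairing_apply,
      ← Equiv.sum_comp (Equiv.inv Fˣ)]
    exact sum_congr rfl fun y _ ↦ by simp [mul_comm]
  rw [mul_sum]
  simp only [← Units.val_mul]
  calc _ = ∑ y : Fˣ, ∑ j ∈ range (2 ^ n - 1), (traceSign ((y⁻¹ : Fˣ) : F) : WittVector 2 F) *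
        teichmuller 2 (y : F) ^ j * (teichmullerGaussSum F j * teichmuller 2 (a : F) ^ j) := by
        refine sum_congr rfl fun y _ ↦ ?_
        rw [mul_left_comm, traceSign_eq_sum_teichmullerGaussSum hcard, mul_sum]
        refine sum_congr rfl fun j _ ↦ ?_
        rw [Units.val_mul, map_mul]
        ring
    _ = _ := by
        rw [sum_comm]
        refine sum_congr rfl fun j _ ↦ ?_
        rw [← sum_mul, hG]
        ring

theorem exists_teichmullerGaussSum_sq_eq {n j : ℕ} (hn : 6 ≤ n)
    (hcard : Fintype.card F = 2 ^ n) (hj : j < 2 ^ n - 1) : ∃ e, teichmullerGaussSum F j ^ 2 =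
      (if 0 = j then 1 else 0) + 36 * (∑ i ∈ range n, if 2 ^ i = j then 1 else 0) +
        16 * (∑ i ∈ range n, ∑ k ∈ Ioo i n, if 2 ^ i + 2 ^ k = j then 1 else 0) + 64 * e := by
  by_cases h0 : 0 = j
  · subst h0
    refine ⟨0, ?_⟩
    rw [teichmullerGaussSum_zero, sum_eq_zero fun i _ ↦ if_neg (Nat.two_pow_pos i).ne',
      sum_eq_zero fun i _ ↦ sum_eq_zero fun k _ ↦ if_neg (by
        have := Nat.two_pow_pos i
        have := Nat.two_pow_pos k
        omega)]
    simp
  by_cases h1 : ∃ s < n, j = 2 ^ s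
  · obtain ⟨s, hs, rfl⟩ := h1
    obtain ⟨e, he⟩ := exists_teichmullerGaussSum_one_eq (by omega) hcard
    refine ⟨1 + 5 * e + 4 * e ^ 2, ?_⟩
    rw [teichmullerGaussSum_two_pow, he, if_neg h0, sum_eq_single s
      (fun i _ hi ↦ if_neg fun h ↦ hi (Nat.pow_right_injective le_rfl h))
      (fun h ↦ absurd (mem_range.2 hs) h), if_pos rfl,
      sum_eq_zero fun i _ ↦ sum_eq_zero fun k hk ↦
        if_neg (two_pow_add_two_pow_ne_two_pow (mem_Ioo.1 hk).1 s)]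
    ring
  obtain ⟨e, he⟩ := exists_teichmullerGaussSum_eq_mod_eight (by omega) hcard hj
  have hsum : ∑ i ∈ range n, (if 2 ^ i = j then (1 : WittVector 2 F) else 0) = 0 :=
    sum_eq_zero fun i hi ↦ if_neg fun h ↦ h1 ⟨i, mem_range.1 hi, h.symm⟩
  rw [if_neg h0, hsum] at he
  rw [if_neg h0, hsum]
  by_cases h2 : ∃ s t, s < t ∧ t < n ∧ j = 2 ^ s + 2 ^ t
  · obtain ⟨s, t, hst, ht, rfl⟩ := h2
    have hpair : ∑ i ∈ range n, ∑ k ∈ Ioo i n,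
        (if 2 ^ i + 2 ^ k = 2 ^ s + 2 ^ t then (1 : WittVector 2 F) else 0) = 1 := by
      rw [sum_eq_single s, sum_eq_single t, if_pos rfl]
      · exact fun k hk hkt ↦ if_neg fun h ↦
          hkt (two_pow_add_two_pow_inj (mem_Ioo.1 hk).1 hst h).2
      · exact fun h ↦ absurd (mem_Ioo.2 ⟨hst, ht⟩) h
      · exact fun i _ his ↦ sum_eq_zero fun k hk ↦ if_neg fun h ↦
          his (two_pow_add_two_pow_inj (mem_Ioo.1 hk).1 hst h).1
      · exact fun h ↦ absurd (mem_range.2 (hst.trans ht)) h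
    rw [hpair] at he ⊢
    obtain ⟨r, rfl⟩ := Nat.exists_eq_add_of_le hn
    rw [he]
    refine ⟨1024 * 2 ^ (2 * r) - 32 * 2 ^ r - 64 * 2 ^ r * e + e + e ^ 2, ?_⟩
    rw [pow_add]
    ring
  · rw [sum_eq_zero fun i hi ↦ sum_eq_zero fun k hk ↦ if_neg fun h ↦
      h2 ⟨i, k, (mem_Ioo.1 hk).1, (mem_Ioo.1 hk).2, h.symm⟩] at he ⊢
    exact ⟨e ^ 2, by rw [he]; ring⟩

theorem sum_teichmullerGaussSum_sq_mul {n : ℕ} (hn : 6 ≤ n) (hcard : Fintype.card F = 2 ^ n)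
    (a : F) : ∃ e, ∑ j ∈ range (2 ^ n - 1), teichmullerGaussSum F j ^ 2 * teichmuller 2 a ^ j =
      1 + 36 * liftedTrace n a + 16 * liftedQuadTrace n a + 64 * e := by
  have : ∀ j, ∃ e, j < 2 ^ n - 1 → teichmullerGaussSum F j ^ 2 =
      (if 0 = j then 1 else 0) + 36 * (∑ i ∈ range n, if 2 ^ i = j then 1 else 0) +
        16 * (∑ i ∈ range n, ∑ k ∈ Ioo i n, if 2 ^ i + 2 ^ k = j then 1 else 0) + 64 * e := by
    intro j
    by_cases hj : j < 2 ^ n - 1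
    · obtain ⟨e, he⟩ := exists_teichmullerGaussSum_sq_eq hn hcard hj
      exact ⟨e, fun _ ↦ he⟩
    · exact ⟨0, fun h ↦ absurd h hj⟩
  choose e he using this
  have hind : ∀ m < 2 ^ n - 1, ∑ j ∈ range (2 ^ n - 1),
      (if m = j then (1 : WittVector 2 F) else 0) * teichmuller 2 a ^ j =
        teichmuller 2 a ^ m := by
    intro m hm
    simp [ite_mul, hm]
  have h8 : 2 ^ 6 ≤ 2 ^ n := Nat.pow_le_pow_right (by norm_num) hn
  have h2 : 2 ^ n = 2 * 2 ^ (n - 1) := by rw [← pow_succ', Nat.sub_add_cancel (by omega)]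
  have hT : ∑ j ∈ range (2 ^ n - 1), (∑ i ∈ range n, if 2 ^ i = j then (1 : WittVector 2 F) else 0) *
      teichmuller 2 a ^ j = liftedTrace n a := by
    simp only [sum_mul]
    rw [sum_comm, liftedTrace]
    refine sum_congr rfl fun i hi ↦ hind _ ?_
    have h1 : 2 ^ i ≤ 2 ^ (n - 1) :=
      Nat.pow_le_pow_right (by norm_num) (by have := mem_range.1 hi; omega)
    omega
  have hQ : ∑ j ∈ range (2 ^ n - 1), (∑ i ∈ range n, ∑ k ∈ Ioo i n,
      if 2 ^ i + 2 ^ k = j then (1 : WittVector 2 F) else 0) * teichmuller 2 a ^ j =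
        liftedQuadTrace n a := by
    simp only [sum_mul]
    rw [sum_comm, liftedQuadTrace]
    refine sum_congr rfl fun i hi ↦ ?_
    rw [sum_comm]
    refine sum_congr rfl fun k hk ↦ hind _ ?_
    have := two_pow_add_two_pow_le (mem_Ioo.1 hk).1 (mem_Ioo.1 hk).2
    omega
  refine ⟨∑ j ∈ range (2 ^ n - 1), e j * teichmuller 2 a ^ j, ?_⟩
  rw [sum_congr rfl fun j hj ↦ congrArg (· * teichmuller 2 a ^ j) (he j (mem_range.1 hj))]
  simp only [add_mul, sum_add_distrib, mul_assoc, ← mul_sum]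
  rw [hind 0 (by omega), pow_zero]
  rw [hT, hQ]

theorem exists_kloosterman_eq {n : ℕ} (hn : 6 ≤ n) (hcard : Fintype.card F = 2 ^ n) (a : F) :
    ∃ e, ((∑ x : F, traceSign (x ^ (2 ^ n - 2) + a * x) : ℤ) : WittVector 2 F) =
      -36 * liftedTrace n a - 16 * liftedQuadTrace n a + 64 * e := by
  have h6 : 2 ^ 6 ≤ 2 ^ n := Nat.pow_le_pow_right (by norm_num) hn
  have hinv : ∀ y : Fˣ, (y : F) ^ (2 ^ n - 2) = ((y⁻¹ : Fˣ) : F) := by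
    intro y
    rw [← Units.val_pow_eq_pow_val]
    congr 1
    have h : y ^ (2 ^ n - 2 + 1) = 1 := by
      rw [show 2 ^ n - 2 + 1 = Fintype.card Fˣ by rw [Fintype.card_units, hcard]; omega,
        pow_card_eq_one]
    exact eq_inv_of_mul_eq_one_left (by rw [← pow_succ, h])
  have hK : ∑ x : F, traceSign (x ^ (2 ^ n - 2) + a * x) =
      1 + ∑ y : Fˣ, traceSign ((y⁻¹ : Fˣ) : F) * traceSign (a * y) := by
    rw [sum_eq_add_sum_units, mul_zero, add_zero, zero_pow (by omega), traceSign_zero]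
    simp only [hinv, traceSign_add]
  by_cases ha : a = 0
  · subst ha
    refine ⟨0, ?_⟩
    have h := sum_eq_add_sum_units (fun x : F ↦ traceSign x)
    rw [sum_traceSign, traceSign_zero, ← Equiv.sum_comp (Equiv.inv Fˣ)] at h
    rw [hK]
    simp only [zero_mul, traceSign_zero, mul_one]
    simp only [Equiv.inv_apply] at h
    rw [← h]
    simp [liftedTrace, liftedQuadTrace, teichmuller_zero]
  · lift a to Fˣ using IsUnit.mk0 a ha
    obtain ⟨e, he⟩ := sum_teichmullerGaussSum_sq_mul hn hcard (a : F)
    have h := (sum_traceSign_inv_mul_traceSign hcard a).trans he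
    rw [hK]
    rw [Int.cast_add, Int.cast_one, Int.cast_sum]
    simp only [Int.cast_mul]
    generalize ∑ y : Fˣ, (traceSign ((y⁻¹ : Fˣ) : F) * traceSign ((a : F) * y) : WittVector 2 F)
      = S at h ⊢
    obtain ⟨r, rfl⟩ := Nat.exists_eq_add_of_le hn
    rw [pow_add] at h
    exact ⟨2 ^ r * S - e, by linear_combination -h⟩

end GaussSum

/-- For `n ≥ 6`, `q = 2^n`, `a ∈ F_q`: in the ring of integers `𝕎(F_q)` of `ℚ₂(ξ)`,
`K(a) ≡ -36·T̂(a) - 16·Q̂(a) (mod 64)` where `T̂` is the lifted trace and `Q̂` the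
lifted quadratic trace (with `2Q̂(a) = T̂(a)² - T̂(a)`); in particular
`K(a) ≡ 0 (mod 64) ↔ T̂(a) ≡ 0 (mod 16)`, `K(a) ≡ 4 (mod 64) ↔ T̂(a) ≡ 11 (mod 16)`,
and `K(a) ≡ 32 (mod 64) ↔ T̂(a) ≡ 8 (mod 16)`. -/
theorem kloosterman_mod_sixtyfour (n : ℕ) (hn : 6 ≤ n)
    (F : Type*) [Field F] [Fintype F] [CharP F 2] [Algebra (ZMod 2) F]
    (hcard : Fintype.card F = 2 ^ n) (a : F)
    (K : ℤ)
    (hK : K = ∑ x : F, (-1 : ℤ) ^ (Algebra.trace (ZMod 2) F (x ^ (2 ^ n - 2) + a * x)).val)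
    (T Qh : WittVector 2 F)
    (hT : T = ∑ i ∈ Finset.range n, WittVector.teichmuller 2 (a ^ 2 ^ i))
    (hQ : Qh = ∑ i ∈ Finset.range n, ∑ j ∈ Finset.Ioo i n,
              WittVector.teichmuller 2 (a ^ (2 ^ i + 2 ^ j))) :
    (64 : WittVector 2 F) ∣ (K : WittVector 2 F) - (-36 * T - 16 * Qh) ∧
    2 * Qh = T ^ 2 - T ∧
    ((64 : WittVector 2 F) ∣ (K : WittVector 2 F) ↔ (16 : WittVector 2 F) ∣ T) ∧
    ((64 : WittVector 2 F) ∣ (K : WittVector 2 F) - 4 ↔ (16 : WittVector 2 F) ∣ T - 11) ∧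
    ((64 : WittVector 2 F) ∣ (K : WittVector 2 F) - 32 ↔ (16 : WittVector 2 F) ∣ T - 8) := by
  classical
  have hT' : T = liftedTrace n a := by simp only [hT, liftedTrace, map_pow]
  have hQ' : Qh = liftedQuadTrace n a := by simp only [hQ, liftedQuadTrace, map_pow]
  have h2 : T ^ 2 = T + 2 * Qh := by rw [hT', hQ', liftedTrace_sq hcard]
  obtain ⟨e, he⟩ := exists_kloosterman_eq hn hcard a
  simp only [traceSign] at he
  rw [← hK, ← hT', ← hQ'] at he
  refine ⟨⟨e, by rw [he]; ring⟩, by rw [h2]; ring,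
    sixtyfour_dvd_iff_of_eq (u := 7 + 2 * T) (e := e) ⟨3 + T, by ring⟩ ?_,
    sixtyfour_dvd_iff_of_eq (u := 2 * T + 29) (e := e - 20) ⟨T + 14, by ring⟩ ?_,
    sixtyfour_dvd_iff_of_eq (u := 2 * T + 23) (e := e - 12) ⟨T + 11, by ring⟩ ?_⟩
  all_goals rw [he]; linear_combination 8 * h2
end
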